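/- Let {I_j} be a Cantor construction whose Cantor set has Lebesgue measure zero, i.e. |I_l^k| = Σ_{h≥0} Σ_{m=0}^{2^h−1} |G_{2^h·l+m}^{k+h}| for all k ≥ 0 and 0 ≤ l ≤ 2^k − 1, and whose gap sequence is decreasing, i.e. |G_l^k| ≤ |G_{l'}^{k'}| whenever 2^{k'} + l' < 2^k + l. Then for every binary word j and every m ∈ ℕ one has |I_{j1}| ≤ 2^m·|I_{j10^m}| + (2^m − 1)·|G_j|; equivalently, 1/2^m ≤ (|G_j| + |I_{j10^m}|)/(|G_j| + |I_{j1}|). -/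

import Mathlib

/-!
Splitting an interval gives `|I_p| = |I_{p0}| + |G_p| + |I_{p1}|`. Vanishing Lebesgue measure writes
`|I_{p0}|` and `|I_{p1}|` as sums of gap lengths, level by level, and the monotonicity of the gap
sequence compares them termwise, so `|I_{p1}| ≤ |I_{p0}|` (`len_true_le_len_false`) and hence
`|I_p| ≤ 2 |I_{p0}| + |G_p|`. For `p = j10^m` one has `|G_p| ≤ |G_j|`, and the bound
`|I_{j1}| ≤ 2^m |I_{j10^m}| + (2^m - 1) |G_j|` follows by induction on `m`.
-/

open MeasureTheory Set Filter
open scoped ENNReal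

noncomputable section

/-- `Iv w δ` is the closed interval with midpoint `w` and diameter `δ`. -/
def Iv (w δ : ℝ) : Set ℝ := Set.Icc (w - δ / 2) (w + δ / 2)

/-- A Cantor construction on `ℝ`: a family of nonempty closed intervals
`I j = [a j, b j]` indexed by finite binary words `j : List Bool`, such that
`I (j ++ [false])` and `I (j ++ [true])` are disjoint subsets of `I j` sharing,
respectively, the left and the right endpoint with `I j`, and such that the
maximal diameter at level `n` tends to `0`. -/
structure CantorConstruction where
  a : List Bool → ℝ
  b : List Bool → ℝ
  le : ∀ j, a j ≤ b j
  left0 : ∀ j, a (j ++ [false]) = a j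
  right1 : ∀ j, b (j ++ [true]) = b j
  sub0 : ∀ j, b (j ++ [false]) ≤ b j
  sub1 : ∀ j, a j ≤ a (j ++ [true])
  disj : ∀ j, b (j ++ [false]) < a (j ++ [true])
  shrink : ∀ ε > (0 : ℝ), ∃ N : ℕ, ∀ j : List Bool, N ≤ j.length → b j - a j < ε

namespace CantorConstruction

variable (C : CantorConstruction)

/-- The basic interval `I_j`. -/
def I (j : List Bool) : Set ℝ := Set.Icc (C.a j) (C.b j)

/-- The diameter `|I_j|` of the basic interval `I_j`. -/
def len (j : List Bool) : ℝ := C.b j - C.a j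

/-- The midpoint of the basic interval `I_j`. -/
def mid (j : List Bool) : ℝ := (C.a j + C.b j) / 2

/-- The gap `G_j = I_j \ (I_{j0} ∪ I_{j1})`. -/
def gap (j : List Bool) : Set ℝ :=
  Set.Ioo (C.b (j ++ [false])) (C.a (j ++ [true]))

/-- The diameter `|G_j|` of the gap `G_j`. -/
def gapLen (j : List Bool) : ℝ := C.a (j ++ [true]) - C.b (j ++ [false])

/-- The Cantor set `C = ⋂_n ⋃_{|j| = n} I_j` associated to the construction. -/
def cantorSet : Set ℝ := ⋂ n : ℕ, ⋃ j ∈ {j : List Bool | j.length = n}, C.I j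

/-- `ν` is the Cantor measure of the construction: a Borel probability measure on `ℝ`
with `ν (I_j) = 2^{-|j|}` for every binary word `j`. -/
def IsCantorMeasure (ν : Measure ℝ) : Prop :=
  IsProbabilityMeasure ν ∧ ∀ j : List Bool, ν (C.I j) = (2 ^ j.length : ℝ≥0∞)⁻¹

end CantorConstruction

/-- `word k l` is the length-`k` binary expansion of `l` (most significant digit first),
so that `I_l^k = I (word k l)` in the step/position indexing. -/
def word : ℕ → ℕ → List Bool
  | 0, _ => []
  | k + 1, l => word k (l / 2) ++ [decide (l % 2 = 1)]

/-- `h : ℝ × (0,∞) → (0,∞)` is a gauge function: continuous, positive,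
`h (w, δ) → 0` as `δ → 0` for every `w`, and increasing as an interval function. -/
def IsGauge (h : ℝ → ℝ → ℝ) : Prop :=
  ContinuousOn (Function.uncurry h) {p : ℝ × ℝ | 0 < p.2} ∧
  (∀ w δ : ℝ, 0 < δ → 0 < h w δ) ∧
  (∀ w : ℝ, Tendsto (h w) (nhdsWithin 0 (Set.Ioi 0)) (nhds 0)) ∧
  (∀ w δ w' δ' : ℝ, 0 < δ → 0 < δ' → Iv w δ ⊆ Iv w' δ' → h w δ ≤ h w' δ')

/-- The generalized Hausdorff measure `μ_h` associated to a gauge function `h`: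
`μ_h(E) = lim_{δ → 0} inf { Σ_k h (w_k, δ_k) }`, the infimum being over countable
covers of `E` by intervals `Iv w_k δ_k` with `0 < δ_k ≤ δ`. -/
def muH (h : ℝ → ℝ → ℝ) (E : Set ℝ) : ℝ≥0∞ :=
  ⨆ (δ : ℝ) (_ : 0 < δ),
    ⨅ (c : ℕ → ℝ × ℝ)
      (_ : (∀ k, 0 < (c k).2 ∧ (c k).2 ≤ δ) ∧ E ⊆ ⋃ k, Iv (c k).1 (c k).2),
      ∑' k, ENNReal.ofReal (h (c k).1 (c k).2)

/-- Second partial derivative `∂²h/∂w²`. -/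
def d11 (h : ℝ → ℝ → ℝ) (w δ : ℝ) : ℝ :=
  deriv (fun x => deriv (fun y => h y δ) x) w

/-- Mixed second partial derivative `∂²h/∂w∂δ`. -/
def d12 (h : ℝ → ℝ → ℝ) (w δ : ℝ) : ℝ :=
  deriv (fun x => deriv (fun d => h x d) δ) w

/-- Second partial derivative `∂²h/∂δ²`. -/
def d22 (h : ℝ → ℝ → ℝ) (w δ : ℝ) : ℝ :=
  deriv (fun d => deriv (fun e => h w e) d) δ

end

namespace CantorConstruction

lemma gapLen_pos (C : CantorConstruction) (p : List Bool) : 0 < C.gapLen p :=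
  sub_pos.mpr (C.disj p)

lemma len_nonneg (C : CantorConstruction) (p : List Bool) : 0 ≤ C.len p :=
  sub_nonneg.mpr (C.le p)

lemma len_eq (C : CantorConstruction) (p : List Bool) :
    C.len p = C.len (p ++ [false]) + C.gapLen p + C.len (p ++ [true]) := by
  simp only [len, gapLen, C.left0, C.right1]
  ring

lemma len_pos (C : CantorConstruction) (p : List Bool) : 0 < C.len p := by
  linarith [C.len_eq p, C.gapLen_pos p, C.len_nonneg (p ++ [false]), C.len_nonneg (p ++ [true])]

end CantorConstruction

lemma word_two_mul (k l : ℕ) : word (k + 1) (2 * l) = word k l ++ [false] := by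
  simp [word]

lemma word_two_mul_add_one (k l : ℕ) : word (k + 1) (2 * l + 1) = word k l ++ [true] := by
  have h : (2 * l + 1) / 2 = l := by omega
  simp [word, h]

lemma exists_eq_word (p : List Bool) : ∃ k l : ℕ, l < 2 ^ k ∧ p = word k l := by
  induction p using List.reverseRecOn with
  | nil => exact ⟨0, 0, by simp, rfl⟩
  | append_singleton p c ih =>
    obtain ⟨k, l, hl, rfl⟩ := ih
    cases c
    · exact ⟨k + 1, 2 * l, by rw [pow_succ]; omega, (word_two_mul k l).symm⟩
    · exact ⟨k + 1, 2 * l + 1, by rw [pow_succ]; omega, (word_two_mul_add_one k l).symm⟩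

/-- A gap is at least as long as the gaps of the two children of its interval. -/
lemma gapLen_child_le (C : CantorConstruction)
    (hdec : ∀ k l k' l' : ℕ, l < 2 ^ k → l' < 2 ^ k' → 2 ^ k' + l' < 2 ^ k + l →
      C.gapLen (word k l) ≤ C.gapLen (word k' l'))
    (p : List Bool) (c : Bool) : C.gapLen (p ++ [c]) ≤ C.gapLen p := by
  obtain ⟨k, l, hl, rfl⟩ := exists_eq_word p
  have hk : 0 < 2 ^ k := by positivity
  cases c
  · rw [← word_two_mul]
    apply hdec <;> first | exact hl | (rw [pow_succ]; omega)
  · rw [← word_two_mul_add_one]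
    apply hdec <;> first | exact hl | (rw [pow_succ]; omega)

lemma gapLen_descendant_le (C : CantorConstruction)
    (hdec : ∀ k l k' l' : ℕ, l < 2 ^ k → l' < 2 ^ k' → 2 ^ k' + l' < 2 ^ k + l →
      C.gapLen (word k l) ≤ C.gapLen (word k' l'))
    (p q : List Bool) : C.gapLen (p ++ q) ≤ C.gapLen p := by
  induction q using List.reverseRecOn with
  | nil => simp
  | append_singleton q c ih =>
    rw [← List.append_assoc]
    exact (gapLen_child_le C hdec _ c).trans ih

/-- The left child of an interval is at least as long as the right child: both lengths are sums of
gap lengths, and at each level the gaps of the right child come after those of the left child. -/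
lemma len_true_le_len_false (C : CantorConstruction)
    (hzero : ∀ k l : ℕ, l < 2 ^ k →
      C.len (word k l) =
        ∑' hh : ℕ, ∑ m ∈ Finset.range (2 ^ hh),
          C.gapLen (word (k + hh) (2 ^ hh * l + m)))
    (hdec : ∀ k l k' l' : ℕ, l < 2 ^ k → l' < 2 ^ k' → 2 ^ k' + l' < 2 ^ k + l →
      C.gapLen (word k l) ≤ C.gapLen (word k' l'))
    (p : List Bool) : C.len (p ++ [true]) ≤ C.len (p ++ [false]) := by
  obtain ⟨k, l, hl, rfl⟩ := exists_eq_word p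
  rw [← word_two_mul, ← word_two_mul_add_one]
  -- A divergent series would have the junk value `0`, but lengths are positive.
  have hsum : ∀ k l : ℕ, l < 2 ^ k → Summable fun hh : ℕ =>
      ∑ m ∈ Finset.range (2 ^ hh), C.gapLen (word (k + hh) (2 ^ hh * l + m)) := by
    intro k l hl
    by_contra hns
    have h := hzero k l hl
    rw [tsum_eq_zero_of_not_summable hns] at h
    exact (C.len_pos _).ne' h
  have h0 : 2 * l < 2 ^ (k + 1) := by rw [pow_succ]; omega
  have h1 : 2 * l + 1 < 2 ^ (k + 1) := by rw [pow_succ]; omega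
  rw [hzero _ _ h0, hzero _ _ h1]
  refine Summable.tsum_le_tsum (fun hh => Finset.sum_le_sum fun m hm => ?_)
    (hsum _ _ h1) (hsum _ _ h0)
  have hm : m < 2 ^ hh := Finset.mem_range.mp hm
  have hpow : 2 ^ (k + 1 + hh) = 2 ^ hh * 2 ^ (k + 1) := by rw [pow_add, mul_comm]
  have hle : 2 ^ hh * (2 * l + 1 + 1) ≤ 2 ^ hh * 2 ^ (k + 1) := Nat.mul_le_mul_left _ h1
  have e : 2 ^ hh * (2 * l + 1 + 1) = 2 ^ hh * (2 * l + 1) + 2 ^ hh := by ring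
  have e' : 2 ^ hh * (2 * l + 1) = 2 ^ hh * (2 * l) + 2 ^ hh := by ring
  apply hdec <;> omega

/-- For a Cantor construction whose Cantor set has Lebesgue measure
zero and whose gap sequence is decreasing, for every binary word `j` and every `m`,
`|I_{j1}| ≤ 2^m·|I_{j10^m}| + (2^m − 1)·|G_j|`; equivalently,
`1/2^m ≤ (|G_j| + |I_{j10^m}|)/(|G_j| + |I_{j1}|)`. -/
theorem statement9 (C : CantorConstruction)
    (hzero : ∀ k l : ℕ, l < 2 ^ k →
      C.len (word k l) =
        ∑' hh : ℕ, ∑ m ∈ Finset.range (2 ^ hh),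
          C.gapLen (word (k + hh) (2 ^ hh * l + m)))
    (hdec : ∀ k l k' l' : ℕ, l < 2 ^ k → l' < 2 ^ k' → 2 ^ k' + l' < 2 ^ k + l →
      C.gapLen (word k l) ≤ C.gapLen (word k' l')) :
    ∀ (j : List Bool) (m : ℕ),
      (C.len (j ++ [true]) ≤
        2 ^ m * C.len (j ++ [true] ++ List.replicate m false) +
          (2 ^ m - 1) * C.gapLen j) ∧
      (1 : ℝ) / 2 ^ m ≤
        (C.gapLen j + C.len (j ++ [true] ++ List.replicate m false)) /
        (C.gapLen j + C.len (j ++ [true])) := by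
  intro j m
  have key : C.len (j ++ [true]) ≤
      2 ^ m * C.len (j ++ [true] ++ List.replicate m false) + (2 ^ m - 1) * C.gapLen j := by
    induction m with
    | zero => simp
    | succ m ih =>
      rw [List.replicate_succ', ← List.append_assoc]
      set p := j ++ [true] ++ List.replicate m false with hp
      have hgap : C.gapLen p ≤ C.gapLen j := by
        rw [hp, List.append_assoc]
        exact gapLen_descendant_le C hdec j _
      have hstep : C.len p ≤ 2 * C.len (p ++ [false]) + C.gapLen j := by
        linarith [C.len_eq p, len_true_le_len_false C hzero hdec p]
      have hmul := mul_le_mul_of_nonneg_left hstep (by positivity : (0 : ℝ) ≤ 2 ^ m)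
      rw [pow_succ]
      linarith
  refine ⟨key, ?_⟩
  rw [div_le_div_iff₀ (by positivity) (add_pos (C.gapLen_pos j) (C.len_pos _))]
  linarith
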